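/- arXiv:2312.05240 — 2 statements merged into one kernel-verified Lean document; each statement's English description precedes it below -/
import Mathlib

section
/- The assignment sending a to the 4×4 integer matrix with rows (1,0,0,1), (0,−1,0,1), (0,0,−1,0), (0,0,0,1) and b to the 4×4 integer matrix with rows (−1,0,0,0), (0,1,0,1), (0,0,−1,1), (0,0,0,1) extends to a group homomorphism from P to GL(4, ℤ), and this homomorphism is injective. -/
/-!
The representation comes from the action of `P` on `ℤ³` by affine maps whose linear parts are
diagonal with entries `±1`, written in homogeneous coordinates. In `P`, the elements `x = a²`,
`y = b²` and `z = (ab)²` commute, while conjugation by `a` and by `b` inverts some of them and fixes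
the others, so every element is `xⁱ yʲ zᵏ c` with `c ∈ {1, a, b, ab}`. The four coset
representatives act with different linear parts, and `xⁱ yʲ zᵏ` acts as the translation by
`(2i, 2j, -2k)`; hence only the identity acts trivially.
-/

noncomputable section

/-- The two relators of the Promislow group `P = ⟨a, b | b⁻¹a²b = a⁻², a⁻¹b²a = b⁻²⟩`,
written as words that equal the identity: `b⁻¹a²ba²` and `a⁻¹b²ab²`. -/
def Prels : Set (FreeGroup (Fin 2)) :=
  {(FreeGroup.of 1)⁻¹ * (FreeGroup.of 0) ^ 2 * (FreeGroup.of 1) * (FreeGroup.of 0) ^ 2,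
   (FreeGroup.of 0)⁻¹ * (FreeGroup.of 1) ^ 2 * (FreeGroup.of 0) * (FreeGroup.of 1) ^ 2}

/-- The Promislow group. -/
abbrev P : Type := PresentedGroup Prels

def pa : P := PresentedGroup.of 0
def pb : P := PresentedGroup.of 1
def px : P := pa ^ 2
def py : P := pb ^ 2
def pz : P := (pa * pb) ^ 2

/-- The matrix image of `a`. -/
def Ma : Matrix (Fin 4) (Fin 4) ℤ :=
  !![1, 0, 0, 1; 0, -1, 0, 1; 0, 0, -1, 0; 0, 0, 0, 1]

/-- The matrix image of `b`. -/
def Mb : Matrix (Fin 4) (Fin 4) ℤ :=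
  !![-1, 0, 0, 0; 0, 1, 0, 1; 0, 0, -1, 1; 0, 0, 0, 1]

section Group

variable {G H : Type*} [Group G] [Group H]

lemma inv_mul_mul_mul_eq_one_iff_semiconjBy_inv {g x : G} :
    g⁻¹ * x * g * x = 1 ↔ SemiconjBy g x x⁻¹ := by
  rw [mul_assoc, mul_assoc, inv_mul_eq_one, SemiconjBy, eq_inv_mul_iff_mul_eq, eq_comm]

/-- A pair of elements satisfying the defining relations `b⁻¹a²b = a⁻²` and `a⁻¹b²a = b⁻²` of the
Promislow group, each recorded as a semiconjugation. -/
structure IsPromislowPair (a b : G) : Prop where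
  semiconjBy_sq_left : SemiconjBy b (a ^ 2) (a ^ 2)⁻¹
  semiconjBy_sq_right : SemiconjBy a (b ^ 2) (b ^ 2)⁻¹

lemma isPromislowPair_iff_lift_eq_one {a b : G} :
    IsPromislowPair a b ↔ ∀ r ∈ Prels, FreeGroup.lift ![a, b] r = 1 := by
  simp only [Prels, Set.forall_mem_insert, Set.mem_singleton_iff, forall_eq, map_mul, map_inv,
    map_pow, FreeGroup.lift_apply_of, Matrix.cons_val_zero, Matrix.cons_val_one,
    inv_mul_mul_mul_eq_one_iff_semiconjBy_inv]
  exact ⟨fun h => ⟨h.semiconjBy_sq_left, h.semiconjBy_sq_right⟩, fun h => ⟨h.1, h.2⟩⟩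

/-- The word `a²ⁱ b²ʲ (ab)²ᵏ`, which acts as a translation in the representation. -/
def translationWord (a b : G) (i j k : ℤ) : G :=
  (a ^ 2) ^ i * (b ^ 2) ^ j * ((a * b) ^ 2) ^ k

/-- The property that `g` is a translation word in `a` and `b` times one of the coset
representatives `1`, `a`, `b`, `ab`. -/
def HasNormalForm (a b g : G) : Prop :=
  ∃ i j k : ℤ, ∃ c ∈ ({1, a, b, a * b} : Set G), g = translationWord a b i j k * c

lemma map_translationWord (f : G →* H) (a b : G) (i j k : ℤ) :
    f (translationWord a b i j k) = translationWord (f a) (f b) i j k := by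
  simp only [translationWord, map_mul, map_zpow, map_pow]

lemma commute_sq_of_semiconjBy_inv {g x : G} (h : SemiconjBy g x x⁻¹) : Commute (g ^ 2) x := by
  have h_inv : SemiconjBy g x⁻¹ x := by simpa only [inv_inv] using h.inv_right
  rw [pow_two]
  exact h_inv.mul_left h

namespace IsPromislowPair

variable {a b : G}

lemma symm (h : IsPromislowPair a b) : IsPromislowPair b a :=
  ⟨h.semiconjBy_sq_right, h.semiconjBy_sq_left⟩

lemma semiconjBy_left_mul_sq (h : IsPromislowPair a b) :
    SemiconjBy a ((a * b) ^ 2) ((a * b) ^ 2)⁻¹ := by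
  have hb : b * a ^ 2 = (a ^ 2)⁻¹ * b := h.semiconjBy_sq_left
  have ha : b ^ 2 * a = a * (b ^ 2)⁻¹ := by
    simpa only [inv_inv] using h.semiconjBy_sq_right.inv_right.eq.symm
  rw [SemiconjBy, eq_inv_mul_iff_mul_eq]
  calc (a * b) ^ 2 * (a * (a * b) ^ 2)
      = a * b * a * (b * a ^ 2) * b * a * b := by simp only [pow_two, mul_assoc]
    _ = a * b * a⁻¹ * (b ^ 2 * a) * b := by rw [hb]; simp [pow_two, mul_assoc]
    _ = a := by rw [ha]; simp [pow_two, mul_assoc]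

lemma swap_mul_sq (h : IsPromislowPair a b) : (b * a) ^ 2 = ((a * b) ^ 2)⁻¹ := by
  have hz : a * ((a * b) ^ 2)⁻¹ = (a * b) ^ 2 * a := by
    simpa only [inv_inv] using h.semiconjBy_left_mul_sq.inv_right.eq
  apply mul_left_cancel (a := a)
  rw [hz]
  simp only [pow_two, mul_assoc]

lemma semiconjBy_right_mul_sq (h : IsPromislowPair a b) :
    SemiconjBy b ((a * b) ^ 2) ((a * b) ^ 2)⁻¹ := by
  have hz := h.symm.semiconjBy_left_mul_sq
  rwa [h.swap_mul_sq, SemiconjBy.inv_right_iff] at hz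

lemma translationWord_mul (h : IsPromislowPair a b) (i j k i' j' k' : ℤ) :
    translationWord a b i j k * translationWord a b i' j' k' =
      translationWord a b (i + i') (j + j') (k + k') := by
  have hyx := (commute_sq_of_semiconjBy_inv h.semiconjBy_sq_left).zpow_zpow j i'
  have hxz := (commute_sq_of_semiconjBy_inv h.semiconjBy_left_mul_sq).zpow_zpow i' k
  have hyz := (commute_sq_of_semiconjBy_inv h.semiconjBy_right_mul_sq).zpow_zpow j' k
  simp only [translationWord, zpow_add]
  rw [(hxz.mul_left hyz).symm.mul_mul_mul_comm, hyx.mul_mul_mul_comm]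

lemma left_mul_translationWord (h : IsPromislowPair a b) (i j k : ℤ) :
    a * translationWord a b i j k = translationWord a b i (-j) (-k) * a := by
  have hx : SemiconjBy a (a ^ 2) (a ^ 2) := (Commute.refl a).pow_right 2
  have hxyz := ((hx.zpow_right i).mul_right (h.semiconjBy_sq_right.zpow_right j)).mul_right
    (h.semiconjBy_left_mul_sq.zpow_right k)
  simpa only [translationWord, zpow_neg, inv_zpow] using hxyz.eq

lemma right_mul_translationWord (h : IsPromislowPair a b) (i j k : ℤ) :
    b * translationWord a b i j k = translationWord a b (-i) j (-k) * b := by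
  have hy : SemiconjBy b (b ^ 2) (b ^ 2) := (Commute.refl b).pow_right 2
  have hxyz := ((h.semiconjBy_sq_left.zpow_right i).mul_right (hy.zpow_right j)).mul_right
    (h.semiconjBy_right_mul_sq.zpow_right k)
  simpa only [translationWord, zpow_neg, inv_zpow] using hxyz.eq

lemma swap_mul (h : IsPromislowPair a b) :
    b * a = translationWord a b (-1) 1 (-1) * (a * b) := by
  have hy : a * translationWord a b 0 (-1) 0 = translationWord a b 0 1 0 * a := by
    simpa using h.left_mul_translationWord 0 (-1) 0
  calc b * a
      = (b * a) ^ 2 * (b * a)⁻¹ := by rw [pow_two, mul_inv_cancel_right]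
    _ = translationWord a b 0 0 (-1) * translationWord a b (-1) 0 0 *
          (a * translationWord a b 0 (-1) 0) * b := by
        rw [h.swap_mul_sq]; simp [translationWord, pow_two, mul_assoc]
    _ = translationWord a b (-1) 1 (-1) * (a * b) := by
        rw [hy, ← mul_assoc, h.translationWord_mul, h.translationWord_mul, mul_assoc]; norm_num

lemma hasNormalForm_translationWord_mul (h : IsPromislowPair a b) (i j k : ℤ) {g : G}
    (hg : HasNormalForm a b g) : HasNormalForm a b (translationWord a b i j k * g) := by
  obtain ⟨i', j', k', c, hc, rfl⟩ := hg
  exact ⟨_, _, _, c, hc, by rw [← mul_assoc, h.translationWord_mul]⟩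

lemma hasNormalForm_left_mul (h : IsPromislowPair a b) {g : G} (hg : HasNormalForm a b g) :
    HasNormalForm a b (a * g) := by
  obtain ⟨i, j, k, c, hc, rfl⟩ := hg
  rw [← mul_assoc, h.left_mul_translationWord, mul_assoc]
  apply h.hasNormalForm_translationWord_mul
  rcases hc with rfl | rfl | rfl | rfl
  · exact ⟨0, 0, 0, a, by simp, by simp [translationWord]⟩
  · exact ⟨1, 0, 0, 1, by simp, by simp [translationWord, pow_two]⟩
  · exact ⟨0, 0, 0, a * c, by simp, by simp [translationWord]⟩
  · exact ⟨1, 0, 0, b, by simp, by simp [translationWord, pow_two, mul_assoc]⟩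

lemma hasNormalForm_right_mul (h : IsPromislowPair a b) {g : G} (hg : HasNormalForm a b g) :
    HasNormalForm a b (b * g) := by
  obtain ⟨i, j, k, c, hc, rfl⟩ := hg
  rw [← mul_assoc, h.right_mul_translationWord, mul_assoc]
  apply h.hasNormalForm_translationWord_mul
  rcases hc with rfl | rfl | rfl | rfl
  · exact ⟨0, 0, 0, b, by simp, by simp [translationWord]⟩
  · exact ⟨-1, 1, -1, c * b, by simp, h.swap_mul⟩
  · exact ⟨0, 1, 0, 1, by simp, by simp [translationWord, pow_two]⟩
  · have hab : a * b * b = translationWord a b 0 (-1) 0 * a := by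
      simpa [translationWord, pow_two, mul_assoc] using h.left_mul_translationWord 0 1 0
    rw [← mul_assoc, h.swap_mul, mul_assoc, hab]
    exact h.hasNormalForm_translationWord_mul _ _ _ ⟨0, -1, 0, a, by simp, rfl⟩

lemma hasNormalForm_of_mem_closure (h : IsPromislowPair a b) {g : G}
    (hg : g ∈ Subgroup.closure {a, b}) : HasNormalForm a b g := by
  induction hg using Subgroup.closure_induction_left with
  | one => exact ⟨0, 0, 0, 1, by simp, by simp [translationWord]⟩
  | mul_left c hc g _ ih =>
    rcases hc with rfl | rfl
    · exact h.hasNormalForm_left_mul ih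
    · exact h.hasNormalForm_right_mul ih
  | inv_mul_cancel c hc g _ ih =>
    rcases hc with rfl | rfl
    · have hinv : c⁻¹ * g = translationWord c b (-1) 0 0 * (c * g) := by
        simp [translationWord, pow_two, mul_assoc]
      exact hinv ▸ h.hasNormalForm_translationWord_mul _ _ _ (h.hasNormalForm_left_mul ih)
    · have hinv : c⁻¹ * g = translationWord a c 0 (-1) 0 * (c * g) := by
        simp [translationWord, pow_two, mul_assoc]
      exact hinv ▸ h.hasNormalForm_translationWord_mul _ _ _ (h.hasNormalForm_right_mul ih)

end IsPromislowPair

end Group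

lemma isPromislowPair_pa_pb : IsPromislowPair pa pb := by
  have hmk : FreeGroup.lift ![pa, pb] = PresentedGroup.mk Prels := by
    ext n
    fin_cases n <;> simp [pa, pb, PresentedGroup.of]
  rw [isPromislowPair_iff_lift_eq_one, hmk]
  exact fun r hr => PresentedGroup.one_of_mem hr

lemma closure_pa_pb : Subgroup.closure {pa, pb} = ⊤ := by
  have hrange : Set.range (PresentedGroup.of : Fin 2 → P) = {pa, pb} := by
    ext g
    simp [pa, pb, eq_comm]
  rw [← hrange, PresentedGroup.closure_range_of]

section DiagAffine

open Matrix

variable {n : ℕ} {R : Type*} [CommRing R]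

/-- The matrix of the affine map `v ↦ s * v + t` on `Rⁿ`, with diagonal linear part, in the
homogeneous coordinates `(v, 1)`. -/
def diagAffineMatrix (s t : Fin n → R) : Matrix (Fin (n + 1)) (Fin (n + 1)) R :=
  reindexRingEquiv R finSumFinEquiv
    (fromBlocks (diagonal s) (replicateCol (Fin 1) t) 0 1)

lemma diagAffineMatrix_mul (s t s' t' : Fin n → R) :
    diagAffineMatrix s t * diagAffineMatrix s' t' = diagAffineMatrix (s * s') (s * t' + t) := by
  rw [diagAffineMatrix, diagAffineMatrix, ← map_mul, fromBlocks_multiply, diagAffineMatrix]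
  congr 2
  · simp
  · ext i
    simp [diagonal_mul]
  all_goals simp

lemma diagAffineMatrix_one_zero : diagAffineMatrix (1 : Fin n → R) 0 = 1 := by
  simp [diagAffineMatrix]

lemma diagAffineMatrix_inj {s t s' t' : Fin n → R} :
    diagAffineMatrix s t = diagAffineMatrix s' t' ↔ s = s' ∧ t = t' := by
  rw [diagAffineMatrix, diagAffineMatrix, (reindexRingEquiv R _).injective.eq_iff, fromBlocks_inj]
  simp [funext_iff]

/-- The element of `GL (n + 1, R)` given by the affine map `v ↦ s * v + t`, for a diagonal linear
part with invertible entries. -/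
def diagAffine (s : Fin n → Rˣ) (t : Fin n → R) : GL (Fin (n + 1)) R where
  val := diagAffineMatrix (fun i => s i) t
  inv := diagAffineMatrix (fun i => ↑(s i)⁻¹) (fun i => -(↑(s i)⁻¹ * t i))
  val_inv := by
    rw [diagAffineMatrix_mul, ← diagAffineMatrix_one_zero]
    congr 1 <;> ext i <;> simp
  inv_val := by
    rw [diagAffineMatrix_mul, ← diagAffineMatrix_one_zero]
    congr 1 <;> ext i <;> simp

lemma diagAffine_mul (s s' : Fin n → Rˣ) (t t' : Fin n → R) :
    diagAffine s t * diagAffine s' t' = diagAffine (s * s') (s • t' + t) :=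
  Units.ext (diagAffineMatrix_mul _ _ _ _)

lemma diagAffine_one_zero : diagAffine (1 : Fin n → Rˣ) (0 : Fin n → R) = 1 :=
  Units.ext diagAffineMatrix_one_zero

lemma diagAffine_eq_one_iff {s : Fin n → Rˣ} {t : Fin n → R} :
    diagAffine s t = 1 ↔ s = 1 ∧ t = 0 := by
  rw [← diagAffine_one_zero, Units.ext_iff]
  simp [diagAffine, diagAffineMatrix_inj, funext_iff]

lemma diagAffine_one_zpow (t : Fin n → R) (m : ℤ) :
    diagAffine 1 t ^ m = diagAffine 1 (m • t) := by
  induction m using Int.induction_on with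
  | zero => rw [zpow_zero, zero_smul, diagAffine_one_zero]
  | succ m ih =>
    rw [_root_.zpow_add_one, ih, diagAffine_mul, one_mul, one_smul, add_smul, one_smul, add_comm t]
  | pred m ih =>
    rw [_root_.zpow_sub_one, ih, mul_inv_eq_iff_eq_mul, diagAffine_mul, one_mul, one_smul, sub_smul,
      one_smul, add_sub_cancel]

end DiagAffine

section Representation

/-- The element of `GL(4, ℤ)` with matrix `Ma`. -/
def glA : Matrix.GeneralLinearGroup (Fin 4) ℤ := diagAffine ![1, -1, -1] ![1, 1, 0]

/-- The element of `GL(4, ℤ)` with matrix `Mb`. -/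
def glB : Matrix.GeneralLinearGroup (Fin 4) ℤ := diagAffine ![-1, 1, -1] ![0, 1, 1]

lemma coe_glA : (glA : Matrix (Fin 4) (Fin 4) ℤ) = Ma := by decide

lemma coe_glB : (glB : Matrix (Fin 4) (Fin 4) ℤ) = Mb := by decide

lemma glA_mul_glB : glA * glB = diagAffine ![-1, -1, 1] ![1, 0, -1] := by
  rw [glA, glB, diagAffine_mul]
  congr 1 <;> decide

lemma glA_sq : glA ^ 2 = diagAffine 1 ![2, 0, 0] := by
  rw [pow_two, glA, diagAffine_mul]
  congr 1 <;> decide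

lemma glB_sq : glB ^ 2 = diagAffine 1 ![0, 2, 0] := by
  rw [pow_two, glB, diagAffine_mul]
  congr 1 <;> decide

lemma glA_mul_glB_sq : (glA * glB) ^ 2 = diagAffine 1 ![0, 0, -2] := by
  rw [pow_two, glA_mul_glB, diagAffine_mul]
  congr 1 <;> decide

lemma isPromislowPair_glA_glB : IsPromislowPair glA glB where
  semiconjBy_sq_left := by
    rw [SemiconjBy, eq_inv_mul_iff_mul_eq, glA_sq, glB, diagAffine_mul, diagAffine_mul]
    congr 1 <;> decide
  semiconjBy_sq_right := by
    rw [SemiconjBy, eq_inv_mul_iff_mul_eq, glB_sq, glA, diagAffine_mul, diagAffine_mul]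
    congr 1 <;> decide

lemma translationWord_glA_glB (i j k : ℤ) :
    translationWord glA glB i j k = diagAffine 1 ![2 * i, 2 * j, -2 * k] := by
  simp only [translationWord, glA_sq, glB_sq, glA_mul_glB_sq, diagAffine_one_zpow, diagAffine_mul,
    one_mul, one_smul]
  congr 1
  ext n
  fin_cases n <;> simp [mul_comm]

lemma translationWord_glA_glB_eq_one_iff {i j k : ℤ} :
    translationWord glA glB i j k = 1 ↔ i = 0 ∧ j = 0 ∧ k = 0 := by
  rw [translationWord_glA_glB, diagAffine_eq_one_iff]
  simp

lemma translationWord_glA_glB_mul_diagAffine_ne_one (i j k : ℤ) {s : Fin 3 → ℤˣ} (hs : s ≠ 1)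
    (t : Fin 3 → ℤ) : translationWord glA glB i j k * diagAffine s t ≠ 1 := by
  rw [translationWord_glA_glB, diagAffine_mul, one_mul, ne_eq, diagAffine_eq_one_iff]
  exact fun h => hs h.1

lemma IsPromislowPair.injective_of_map_eq {G : Type*} [Group G] {a b : G}
    (h : IsPromislowPair a b) (hgen : Subgroup.closure {a, b} = ⊤)
    (f : G →* Matrix.GeneralLinearGroup (Fin 4) ℤ) (ha : f a = glA) (hb : f b = glB) :
    Function.Injective f := by
  rw [injective_iff_map_eq_one]
  intro g hg
  obtain ⟨i, j, k, c, hc, rfl⟩ := h.hasNormalForm_of_mem_closure (g := g) (hgen ▸ trivial)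
  rw [map_mul, map_translationWord, ha, hb] at hg
  rcases hc with rfl | rfl | rfl | rfl
  · rw [map_one, mul_one, translationWord_glA_glB_eq_one_iff] at hg
    obtain ⟨rfl, rfl, rfl⟩ := hg
    simp [translationWord]
  · rw [ha] at hg
    exact absurd hg (translationWord_glA_glB_mul_diagAffine_ne_one i j k (by decide) _)
  · rw [hb] at hg
    exact absurd hg (translationWord_glA_glB_mul_diagAffine_ne_one i j k (by decide) _)
  · rw [map_mul, ha, hb, glA_mul_glB] at hg
    exact absurd hg (translationWord_glA_glB_mul_diagAffine_ne_one i j k (by decide) _)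

end Representation

/-- The assignment `a ↦ Ma`, `b ↦ Mb` extends to a group homomorphism `P → GL(4, ℤ)`,
and this homomorphism is injective. -/
theorem faithful_representation :
    ∃ f : P →* Matrix.GeneralLinearGroup (Fin 4) ℤ,
      ((f pa : Matrix (Fin 4) (Fin 4) ℤ) = Ma) ∧
      ((f pb : Matrix (Fin 4) (Fin 4) ℤ) = Mb) ∧
      Function.Injective f := by
  let f : P →* Matrix.GeneralLinearGroup (Fin 4) ℤ :=
    PresentedGroup.toGroup (isPromislowPair_iff_lift_eq_one.mp isPromislowPair_glA_glB)
  have ha : f pa = glA := PresentedGroup.toGroup.of _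
  have hb : f pb = glB := PresentedGroup.toGroup.of _
  exact ⟨f, by rw [ha, coe_glA], by rw [hb, coe_glB],
    isPromislowPair_pa_pb.injective_of_map_eq closure_pa_pb f ha hb⟩
end
end

section
/- Let φ₀ : P → P be the automorphism determined by a ↦ a⁻¹, b ↦ b⁻¹, and let χ₀ : P → Rˣ be the group homomorphism determined by a ↦ −s², b ↦ −t². Then the R-algebra automorphism θ₀ of R[P] determined by θ₀(Σ_g λ_g·g) = Σ_g χ₀(g)·λ_g·φ₀(g) satisfies θ₀(α) = α (α is θ₀-symmetric). -/
open MvPolynomial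

noncomputable section

/-- The ring `R = ℤ[s,t]/⟨s⁴+1, t⁴+1⟩`. -/
abbrev Rr : Type :=
  MvPolynomial (Fin 2) ℤ ⧸
    Ideal.span {(X 0 : MvPolynomial (Fin 2) ℤ) ^ 4 + 1, (X 1 : MvPolynomial (Fin 2) ℤ) ^ 4 + 1}

def s : Rr := Ideal.Quotient.mk _ (X 0)
def t : Rr := Ideal.Quotient.mk _ (X 1)

/-- The image of a group element in the group ring `R[P]`. -/
def G (g : P) : MonoidAlgebra Rr P := MonoidAlgebra.of Rr P g

def α1 : MonoidAlgebra Rr P :=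
  1 + t ^ 2 • G (px * pz⁻¹) - t ^ 2 • G (px⁻¹ * pz⁻¹) - s ^ 2 • G (py * pz⁻¹)
    + s ^ 2 • G (py⁻¹ * pz⁻¹)

def αa : MonoidAlgebra Rr P :=
  -(s ^ 2 • G px⁻¹) + 1 - G (px⁻¹ * py⁻¹ * pz) + s ^ 2 • G (py * pz)

def αb : MonoidAlgebra Rr P :=
  G (px⁻¹ * py⁻¹ * pz) - t ^ 2 • G (px * pz) + t ^ 2 • G (py⁻¹ * pz ^ 2) - G (pz ^ 2)

def αab : MonoidAlgebra Rr P :=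
  -(t ^ 2 • G (px⁻¹ * pz⁻¹)) - s ^ 2 • G (py * pz⁻¹) + (s ^ 2 * t ^ 2) • G pz⁻¹
    + G (px⁻¹ * py * pz⁻¹) + s ^ 2 • G (px⁻¹ * pz⁻¹ ^ 2) + t ^ 2 • G (py * pz⁻¹ ^ 2)
    - G (pz⁻¹ ^ 2) - (s ^ 2 * t ^ 2) • G (px⁻¹ * py * pz⁻¹ ^ 2)

/-- The unit `α ∈ R[P]`. -/
def αU : MonoidAlgebra Rr P :=
  α1 + s • (αa * G pa) + t • (αb * G pb) + (s * t) • (αab * G (pa * pb))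

def β1 : MonoidAlgebra Rr P :=
  1 + t ^ 2 • G (px⁻¹ * pz) - t ^ 2 • G (px * pz) + s ^ 2 • G (py * pz) - s ^ 2 • G (py⁻¹ * pz)

def βa : MonoidAlgebra Rr P :=
  -1 + s ^ 2 • G px⁻¹ - s ^ 2 • G (py * pz) + G (px⁻¹ * py⁻¹ * pz)

def βb : MonoidAlgebra Rr P :=
  -G (px⁻¹ * py⁻¹ * pz) + t ^ 2 • G (px * pz) - t ^ 2 • G (py⁻¹ * pz ^ 2) + G (pz ^ 2)

def βab : MonoidAlgebra Rr P :=
  (s ^ 2 * t ^ 2) • G (px⁻¹ * py) + 1 - t ^ 2 • G py - s ^ 2 • G px⁻¹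
    - G (px⁻¹ * py * pz) - (s ^ 2 * t ^ 2) • G pz + s ^ 2 • G (py * pz) + t ^ 2 • G (px⁻¹ * pz)

/-- The inverse unit `β ∈ R[P]`. -/
def βU : MonoidAlgebra Rr P :=
  β1 + s • (βa * G pa) + t • (βb * G pb) + (s * t) • (βab * G (pa * pb))

/-! `θ₀` preserves the grading of `R[P]` by the cosets of the free abelian group `⟨x, y, z⟩`, so
each of the four components of `α` must be fixed separately. On `⟨x, y, z⟩` it acts by
`xⁱyʲzᵏ ↦ (-1)^(i+j) x⁻ⁱy⁻ʲzᵏ`, while each coset representative `g ∈ {a, b, ab}` is sent to `c • τg`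
with `c ∈ R` and `τ ∈ ⟨x, y, z⟩`. After multiplication by `c • τ` the terms of each component, other
than the constant term of `α₁`, are exchanged in pairs, up to the relations `s⁴ = t⁴ = -1`. -/

section MonoidAlgebraTwist

variable {K M N : Type*} [CommSemiring K] [Monoid M] [Monoid N]

/-- The `K`-algebra homomorphism `∑ λ_g g ↦ ∑ χ(g) λ_g φ(g)` of monoid algebras attached to a
monoid homomorphism `φ` and a character `χ`. -/
def twistHom (φ : M →* N) (χ : M →* Kˣ) : MonoidAlgebra K M →ₐ[K] MonoidAlgebra K N :=
  MonoidAlgebra.lift K _ M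
    { toFun := fun g => MonoidAlgebra.single (φ g) (χ g : K)
      map_one' := by simp [MonoidAlgebra.one_def]
      map_mul' := fun g h => by simp [MonoidAlgebra.single_mul_single] }

lemma twistHom_single (φ : M →* N) (χ : M →* Kˣ) (g : M) (r : K) :
    twistHom φ χ (MonoidAlgebra.single g r) = MonoidAlgebra.single (φ g) ((χ g : K) * r) := by
  simp [twistHom, MonoidAlgebra.lift_single, mul_comm]

lemma twistHom_comp_eq_id {φ : M →* N} {ψ : N →* M} {χ : M →* Kˣ} {η : N →* Kˣ}
    (hφ : ∀ g, ψ (φ g) = g) (hχ : ∀ g, η (φ g) * χ g = 1) :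
    (twistHom ψ η).comp (twistHom φ χ) = AlgHom.id K (MonoidAlgebra K M) := by
  refine MonoidAlgebra.algHom_ext (fun g => ?_) (by ext)
  have hχ' : (η (φ g) : K) * (χ g : K) = 1 := by rw [← Units.val_mul, hχ, Units.val_one]
  simp [twistHom_single, hφ, hχ']

/-- The twist `∑ λ_g g ↦ ∑ χ(g) λ_g φ(g)` as an algebra isomorphism, for `φ` an isomorphism. -/
def twistEquiv (φ : M ≃* N) (χ : M →* Kˣ) : MonoidAlgebra K M ≃ₐ[K] MonoidAlgebra K N :=
  AlgEquiv.ofAlgHom (twistHom φ χ) (twistHom φ.symm (χ⁻¹.comp φ.symm))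
    (twistHom_comp_eq_id (by simp) (by simp)) (twistHom_comp_eq_id (by simp) (by simp))

lemma twistEquiv_single (φ : M ≃* N) (χ : M →* Kˣ) (g : M) (r : K) :
    twistEquiv φ χ (MonoidAlgebra.single g r) = MonoidAlgebra.single (φ g) ((χ g : K) * r) :=
  twistHom_single _ _ g r

end MonoidAlgebraTwist

lemma map_mul_eq_self_of_smul_mul {K A F : Type*} [CommSemiring K] [Semiring A] [Algebra K A]
    [FunLike F A A] [MulHomClass F A A] {f : F} {β τ g : A} {c : K} (hg : f g = c • (τ * g))
    (hβ : c • (f β * τ) = β) : f (β * g) = β * g := by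
  rw [map_mul, hg, mul_smul_comm, ← mul_assoc, ← smul_mul_assoc, hβ]

section SemiconjByInv

variable {H : Type*} [Group H] {c w : H}

lemma commute_sq_of_semiconjBy_inv_s11 (h : SemiconjBy c w w⁻¹) : Commute w (c ^ 2) := by
  have hcc : SemiconjBy (c * c) w w := by simpa using h.inv_right.mul_left h
  rw [pow_two]
  exact hcc.symm

lemma mul_sq_of_semiconjBy_inv (h : SemiconjBy c w w⁻¹) : (w * c) ^ 2 = c ^ 2 := by
  calc (w * c) ^ 2 = w * (c * w) * c := by simp only [pow_two, mul_assoc]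
    _ = c ^ 2 := by rw [h.eq]; simp [pow_two]

lemma semiconjBy_inv_iff : SemiconjBy c w w⁻¹ ↔ c⁻¹ * w * c * w = 1 := by
  rw [← SemiconjBy.inv_right_iff, inv_inv, SemiconjBy, mul_eq_one_iff_eq_inv, mul_assoc,
    inv_mul_eq_iff_eq_mul, eq_comm]

end SemiconjByInv

/-- The defining relations of the Promislow group, for two elements `a`, `b` of an arbitrary group:
each of `a`, `b` inverts the square of the other under conjugation. -/
structure IsPromislowPair_s11 {H : Type*} [Group H] (a b : H) : Prop where
  right_inverts : SemiconjBy b (a ^ 2) (a ^ 2)⁻¹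
  left_inverts : SemiconjBy a (b ^ 2) (b ^ 2)⁻¹

namespace IsPromislowPair_s11

variable {H : Type*} [Group H] {a b : H}

lemma inv (h : IsPromislowPair_s11 a b) : IsPromislowPair_s11 a⁻¹ b⁻¹ where
  right_inverts := by simpa using h.right_inverts.inv_symm_left
  left_inverts := by simpa using h.left_inverts.inv_symm_left

lemma of_commute (h : Commute a b) (ha : a ^ 4 = 1) (hb : b ^ 4 = 1) : IsPromislowPair_s11 a b where
  right_inverts := by
    rw [inv_eq_of_mul_eq_one_left (by rwa [← pow_add])]
    exact h.symm.pow_right 2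
  left_inverts := by
    rw [inv_eq_of_mul_eq_one_left (by rwa [← pow_add])]
    exact h.pow_right 2

lemma commute_sq_sq (h : IsPromislowPair_s11 a b) : Commute (a ^ 2) (b ^ 2) :=
  commute_sq_of_semiconjBy_inv_s11 h.right_inverts

lemma mul_inverts_left_sq (h : IsPromislowPair_s11 a b) : SemiconjBy (a * b) (a ^ 2) (a ^ 2)⁻¹ :=
  SemiconjBy.mul_left ((Commute.refl a).pow_right 2).inv_right h.right_inverts

lemma mul_inverts_right_sq (h : IsPromislowPair_s11 a b) : SemiconjBy (a * b) (b ^ 2) (b ^ 2)⁻¹ :=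
  h.left_inverts.mul_left ((Commute.refl b).pow_right 2)

lemma commute_left_sq_mul_sq (h : IsPromislowPair_s11 a b) : Commute (a ^ 2) ((a * b) ^ 2) :=
  commute_sq_of_semiconjBy_inv_s11 h.mul_inverts_left_sq

lemma commute_right_sq_mul_sq (h : IsPromislowPair_s11 a b) : Commute (b ^ 2) ((a * b) ^ 2) :=
  commute_sq_of_semiconjBy_inv_s11 h.mul_inverts_right_sq

lemma inv_mul_inv_eq (h : IsPromislowPair_s11 a b) :
    a⁻¹ * b⁻¹ = (a ^ 2)⁻¹ * b ^ 2 * (a * b) := by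
  calc a⁻¹ * b⁻¹ = (a ^ 2)⁻¹ * (a * (b ^ 2)⁻¹) * b := by group
    _ = (a ^ 2)⁻¹ * b ^ 2 * (a * b) := by
      rw [show a * (b ^ 2)⁻¹ = b ^ 2 * a by simpa using h.left_inverts.inv_right.eq]
      simp only [mul_assoc]

lemma inv_mul_inv_sq (h : IsPromislowPair_s11 a b) : (a⁻¹ * b⁻¹) ^ 2 = (a * b) ^ 2 := by
  have hw : SemiconjBy (a * b) ((a ^ 2)⁻¹ * b ^ 2) ((a ^ 2)⁻¹ * b ^ 2)⁻¹ := by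
    rw [h.commute_sq_sq.inv_left.mul_inv]
    exact h.mul_inverts_left_sq.inv_right.mul_right h.mul_inverts_right_sq
  rw [h.inv_mul_inv_eq, mul_sq_of_semiconjBy_inv hw]

end IsPromislowPair_s11

lemma isPromislowPair_pa_pb_s11 : IsPromislowPair_s11 pa pb where
  right_inverts := semiconjBy_inv_iff.2 (PresentedGroup.one_of_mem (rels := Prels) (Or.inl rfl))
  left_inverts := semiconjBy_inv_iff.2 (PresentedGroup.one_of_mem (rels := Prels) (Or.inr rfl))

section UniversalProperty

variable {H : Type*} [Group H] {u v : H}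

/-- The homomorphism out of the Promislow group sending the generators to `u` and `v`. -/
def promislowLift (h : IsPromislowPair_s11 u v) : P →* H :=
  PresentedGroup.toGroup (f := ![u, v]) <| by
    rintro r (rfl | rfl)
    · simpa using semiconjBy_inv_iff.1 h.right_inverts
    · simpa using semiconjBy_inv_iff.1 h.left_inverts

lemma promislowLift_pa (h : IsPromislowPair_s11 u v) : promislowLift h pa = u :=
  PresentedGroup.toGroup.of _

lemma promislowLift_pb (h : IsPromislowPair_s11 u v) : promislowLift h pb = v :=
  PresentedGroup.toGroup.of _

lemma promislow_hom_ext {f g : P →* H} (ha : f pa = g pa) (hb : f pb = g pb) : f = g := by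
  refine PresentedGroup.ext fun i => ?_
  fin_cases i
  exacts [ha, hb]

end UniversalProperty

/-- The endomorphism `a ↦ a⁻¹`, `b ↦ b⁻¹` of the Promislow group. -/
def invGenHom : P →* P := promislowLift isPromislowPair_pa_pb_s11.inv

lemma invGenHom_comp_self : invGenHom.comp invGenHom = MonoidHom.id P :=
  promislow_hom_ext (by simp [invGenHom, promislowLift_pa]) (by simp [invGenHom, promislowLift_pb])

/-- The automorphism `φ₀ : a ↦ a⁻¹, b ↦ b⁻¹` of the Promislow group. -/
def φ₀ : P ≃* P := MonoidHom.toMulEquiv invGenHom invGenHom invGenHom_comp_self invGenHom_comp_self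

lemma φ₀_pa : φ₀ pa = pa⁻¹ := promislowLift_pa isPromislowPair_pa_pb_s11.inv

lemma φ₀_pb : φ₀ pb = pb⁻¹ := promislowLift_pb isPromislowPair_pa_pb_s11.inv

/-- The element `xⁱyʲzᵏ` of the free abelian subgroup `⟨x, y, z⟩` of the Promislow group. -/
def translation (i j k : ℤ) : P := px ^ i * py ^ j * pz ^ k

lemma translation_mul (i j k i' j' k' : ℤ) :
    translation i j k * translation i' j' k' = translation (i + i') (j + j') (k + k') := by
  have hxy : Commute (py ^ j) (px ^ i') := (isPromislowPair_pa_pb_s11.commute_sq_sq.zpow_zpow _ _).symm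
  have hxz : Commute (pz ^ k) (px ^ i') :=
    (isPromislowPair_pa_pb_s11.commute_left_sq_mul_sq.zpow_zpow _ _).symm
  have hyz : Commute (pz ^ k) (py ^ j') :=
    (isPromislowPair_pa_pb_s11.commute_right_sq_mul_sq.zpow_zpow _ _).symm
  calc px ^ i * py ^ j * pz ^ k * (px ^ i' * py ^ j' * pz ^ k')
      = px ^ i * py ^ j * (px ^ i' * py ^ j') * (pz ^ k * pz ^ k') :=
        (hxz.mul_right hyz).mul_mul_mul_comm _ _
    _ = translation (i + i') (j + j') (k + k') := by
        rw [hxy.mul_mul_mul_comm, ← zpow_add, ← zpow_add, ← zpow_add, translation]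

lemma φ₀_translation (i j k : ℤ) : φ₀ (translation i j k) = translation (-i) (-j) k := by
  have hz : (pa⁻¹ * pb⁻¹) ^ 2 = pz := isPromislowPair_pa_pb_s11.inv_mul_inv_sq
  have hφz : φ₀ pz = pz := by
    conv_lhs => rw [pz, map_pow, map_mul, φ₀_pa, φ₀_pb, hz]
  simp only [translation, px, py, map_mul, map_zpow, map_pow, φ₀_pa, φ₀_pb, hφz, inv_pow,
    inv_zpow']

section NegSqUnit

variable {K : Type*} [CommRing K] {u : K}

/-- The unit `-u²`, with inverse `u²`, attached to an element `u` with `u⁴ = -1`. -/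
def negSqUnit (h : u ^ 4 = -1) : Kˣ :=
  ⟨-u ^ 2, u ^ 2, by linear_combination -h, by linear_combination -h⟩

lemma negSqUnit_sq (h : u ^ 4 = -1) : negSqUnit h ^ 2 = -1 := by
  ext
  simp only [negSqUnit, Units.val_pow_eq_pow_val, Units.val_neg, Units.val_one]
  linear_combination h

lemma negSqUnit_pow_four (h : u ^ 4 = -1) : negSqUnit h ^ 4 = 1 := by
  rw [show 4 = 2 * 2 from rfl, pow_mul, negSqUnit_sq, neg_one_sq]

lemma coe_neg_one_zpow (n : ℤ) : (((-1 : Kˣ) ^ n : Kˣ) : K) = (n.negOnePow : ℤ) := by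
  have hneg : Units.map (Int.castRingHom K : ℤ →* K) (-1) = -1 := by
    ext
    simp
  rw [← hneg, ← map_zpow]
  rfl

lemma negSqUnit_mul_sq {v : K} (hu : u ^ 4 = -1) (hv : v ^ 4 = -1) :
    (negSqUnit hu * negSqUnit hv) ^ 2 = 1 := by
  rw [mul_pow, negSqUnit_sq, negSqUnit_sq, neg_mul_neg, one_mul]

lemma isPromislowPair_negSqUnit {v : K} (hu : u ^ 4 = -1) (hv : v ^ 4 = -1) :
    IsPromislowPair_s11 (negSqUnit hu) (negSqUnit hv) :=
  .of_commute (Commute.all _ _) (negSqUnit_pow_four hu) (negSqUnit_pow_four hv)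

/-- The character `a ↦ -u², b ↦ -v²` of the Promislow group. -/
def negSqCharacter {v : K} (hu : u ^ 4 = -1) (hv : v ^ 4 = -1) : P →* Kˣ :=
  promislowLift (isPromislowPair_negSqUnit hu hv)

lemma negSqCharacter_pa {v : K} (hu : u ^ 4 = -1) (hv : v ^ 4 = -1) :
    negSqCharacter hu hv pa = negSqUnit hu :=
  promislowLift_pa _

lemma negSqCharacter_pb {v : K} (hu : u ^ 4 = -1) (hv : v ^ 4 = -1) :
    negSqCharacter hu hv pb = negSqUnit hv :=
  promislowLift_pb _

lemma negSqCharacter_translation {v : K} (hu : u ^ 4 = -1) (hv : v ^ 4 = -1) (i j k : ℤ) :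
    (negSqCharacter hu hv (translation i j k) : K) = ((i + j).negOnePow : ℤ) := by
  simp only [translation, px, py, pz, map_mul, map_zpow, map_pow, negSqCharacter_pa,
    negSqCharacter_pb, negSqUnit_sq, negSqUnit_mul_sq, one_zpow, mul_one, ← zpow_add,
    coe_neg_one_zpow]

end NegSqUnit

lemma s_pow_four : s ^ 4 = -1 :=
  eq_neg_of_add_eq_zero_left <| Ideal.Quotient.eq_zero_iff_mem.2 <| Ideal.subset_span (Or.inl rfl)

lemma t_pow_four : t ^ 4 = -1 :=
  eq_neg_of_add_eq_zero_left <| Ideal.Quotient.eq_zero_iff_mem.2 <| Ideal.subset_span (Or.inr rfl)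

/-- The character `χ₀ : a ↦ -s², b ↦ -t²` of the Promislow group. -/
def χ₀ : P →* Rrˣ := negSqCharacter s_pow_four t_pow_four

/-- The automorphism `θ₀ : ∑ λ_g g ↦ ∑ χ₀(g) λ_g φ₀(g)` of `R[P]`. -/
def θ₀ : MonoidAlgebra Rr P ≃ₐ[Rr] MonoidAlgebra Rr P := twistEquiv φ₀ χ₀

lemma θ₀_G (g : P) : θ₀ (G g) = (χ₀ g : Rr) • G (φ₀ g) := by
  simp [θ₀, G, twistEquiv_single]

lemma G_mul (g h : P) : G (g * h) = G g * G h := map_mul _ _ _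

lemma θ₀_G_translation (i j k : ℤ) :
    θ₀ (G (translation i j k)) = ((i + j).negOnePow : ℤ) • G (translation (-i) (-j) k) := by
  rw [θ₀_G, φ₀_translation, χ₀, negSqCharacter_translation, Int.cast_smul_eq_zsmul]

lemma α1_eq_translations : α1 = 1 + t ^ 2 • G (translation 1 0 (-1))
    - t ^ 2 • G (translation (-1) 0 (-1)) - s ^ 2 • G (translation 0 1 (-1))
    + s ^ 2 • G (translation 0 (-1) (-1)) := by
  simp [α1, translation]

lemma αa_eq_translations : αa = -(s ^ 2 • G (translation (-1) 0 0)) + G (translation 0 0 0)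
    - G (translation (-1) (-1) 1) + s ^ 2 • G (translation 0 1 1) := by
  simp [αa, translation, show G 1 = 1 from map_one _]

lemma αb_eq_translations : αb = G (translation (-1) (-1) 1) - t ^ 2 • G (translation 1 0 1)
    + t ^ 2 • G (translation 0 (-1) 2) - G (translation 0 0 2) := by
  simp [αb, translation, zpow_ofNat]

lemma αab_eq_translations : αab = -(t ^ 2 • G (translation (-1) 0 (-1)))
    - s ^ 2 • G (translation 0 1 (-1)) + (s ^ 2 * t ^ 2) • G (translation 0 0 (-1))
    + G (translation (-1) 1 (-1))
    + s ^ 2 • G (translation (-1) 0 (-2)) + t ^ 2 • G (translation 0 1 (-2))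
    - G (translation 0 0 (-2)) - (s ^ 2 * t ^ 2) • G (translation (-1) 1 (-2)) := by
  simp [αab, translation, zpow_neg, zpow_ofNat]

lemma θ₀_α1 : θ₀ α1 = α1 := by
  have hθ : θ₀ α1 = 1 - t ^ 2 • G (translation (-1) 0 (-1)) + t ^ 2 • G (translation 1 0 (-1))
      + s ^ 2 • G (translation 0 (-1) (-1)) - s ^ 2 • G (translation 0 1 (-1)) := by
    simp [α1_eq_translations, θ₀_G_translation, ← sub_eq_add_neg]
  rw [hθ, α1_eq_translations]
  abel

lemma θ₀_G_pa : θ₀ (G pa) = (-s ^ 2) • (G (translation (-1) 0 0) * G pa) := by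
  have hpa : pa⁻¹ = translation (-1) 0 0 * pa := by simp [translation, px, pow_two]
  rw [θ₀_G, φ₀_pa, χ₀, negSqCharacter_pa, ← G_mul, hpa, negSqUnit]

lemma θ₀_G_pb : θ₀ (G pb) = (-t ^ 2) • (G (translation 0 (-1) 0) * G pb) := by
  have hpb : pb⁻¹ = translation 0 (-1) 0 * pb := by simp [translation, py, pow_two]
  rw [θ₀_G, φ₀_pb, χ₀, negSqCharacter_pb, ← G_mul, hpb, negSqUnit]

lemma θ₀_G_pa_mul_pb :
    θ₀ (G (pa * pb)) = (s ^ 2 * t ^ 2) • (G (translation (-1) 1 0) * G (pa * pb)) := by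
  have hpab : pa⁻¹ * pb⁻¹ = translation (-1) 1 0 * (pa * pb) := by
    simpa [translation, px, py] using isPromislowPair_pa_pb_s11.inv_mul_inv_eq
  rw [θ₀_G, map_mul, map_mul, φ₀_pa, φ₀_pb, χ₀, negSqCharacter_pa, negSqCharacter_pb, ← G_mul, hpab]
  congr 1
  exact neg_mul_neg (s ^ 2) (t ^ 2)

lemma smul_θ₀_αa_mul : (-s ^ 2) • (θ₀ αa * G (translation (-1) 0 0)) = αa := by
  have hθ : θ₀ αa * G (translation (-1) 0 0) = s ^ 2 • G (translation 0 0 0)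
      + G (translation (-1) 0 0) - G (translation 0 1 1)
      - s ^ 2 • G (translation (-1) (-1) 1) := by
    simp [αa_eq_translations, θ₀_G_translation, add_mul, sub_mul, smul_mul_assoc,
      ← G_mul, translation_mul, ← sub_eq_add_neg]
  rw [hθ, αa_eq_translations]
  linear_combination (norm := module)
    s_pow_four • (G (translation (-1) (-1) 1) - G (translation 0 0 0))

lemma smul_θ₀_αb_mul : (-t ^ 2) • (θ₀ αb * G (translation 0 (-1) 0)) = αb := by
  have hθ : θ₀ αb * G (translation 0 (-1) 0) = G (translation 1 0 1)
      + t ^ 2 • G (translation (-1) (-1) 1) - t ^ 2 • G (translation 0 0 2)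
      - G (translation 0 (-1) 2) := by
    simp [αb_eq_translations, θ₀_G_translation, add_mul, sub_mul, smul_mul_assoc,
      ← G_mul, translation_mul, ← sub_eq_add_neg]
  rw [hθ, αb_eq_translations]
  linear_combination (norm := module)
    t_pow_four • (G (translation 0 0 2) - G (translation (-1) (-1) 1))

lemma smul_θ₀_αab_mul : (s ^ 2 * t ^ 2) • (θ₀ αab * G (translation (-1) 1 0)) = αab := by
  have hθ : θ₀ αab * G (translation (-1) 1 0) = t ^ 2 • G (translation 0 1 (-1))
      + s ^ 2 • G (translation (-1) 0 (-1)) + (s ^ 2 * t ^ 2) • G (translation (-1) 1 (-1))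
      + G (translation 0 0 (-1)) - s ^ 2 • G (translation 0 1 (-2))
      - t ^ 2 • G (translation (-1) 0 (-2)) - G (translation (-1) 1 (-2))
      - (s ^ 2 * t ^ 2) • G (translation 0 0 (-2)) := by
    simp [αab_eq_translations, θ₀_G_translation, add_mul, sub_mul, smul_mul_assoc,
      ← G_mul, translation_mul, ← sub_eq_add_neg]
  have hst : s ^ 4 * t ^ 4 = 1 := by
    rw [s_pow_four, t_pow_four]
    exact (neg_mul_neg (1 : Rr) 1).trans (one_mul 1)
  rw [hθ, αab_eq_translations]
  linear_combination (norm := module)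
    s_pow_four • (t ^ 2 • G (translation (-1) 0 (-1)) - t ^ 2 • G (translation 0 1 (-2)))
      + t_pow_four • (s ^ 2 • G (translation 0 1 (-1)) - s ^ 2 • G (translation (-1) 0 (-2)))
      + hst • (G (translation (-1) 1 (-1)) - G (translation 0 0 (-2)))

lemma θ₀_αU : θ₀ αU = αU := by
  simp only [αU, map_add, map_smul, θ₀_α1, map_mul_eq_self_of_smul_mul θ₀_G_pa smul_θ₀_αa_mul,
    map_mul_eq_self_of_smul_mul θ₀_G_pb smul_θ₀_αb_mul,
    map_mul_eq_self_of_smul_mul θ₀_G_pa_mul_pb smul_θ₀_αab_mul]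

/-- With `φ₀ : P → P` the automorphism `a ↦ a⁻¹, b ↦ b⁻¹`, `χ₀ : P → Rˣ` the homomorphism
`a ↦ −s², b ↦ −t²`, and `θ₀` the `R`-algebra automorphism of `R[P]` given by
`θ₀(Σ λ_g g) = Σ χ₀(g) λ_g φ₀(g)`, the unit `α` satisfies `θ₀(α) = α`. -/
theorem alpha_theta0_symmetric :
    ∃ (φ : P ≃* P) (χ : P →* Rrˣ)
      (θ : MonoidAlgebra Rr P ≃ₐ[Rr] MonoidAlgebra Rr P),
      φ pa = pa⁻¹ ∧ φ pb = pb⁻¹ ∧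
      ((χ pa : Rr) = -s ^ 2) ∧ ((χ pb : Rr) = -t ^ 2) ∧
      (∀ (g : P) (r : Rr),
        θ (MonoidAlgebra.single g r) = MonoidAlgebra.single (φ g) ((χ g : Rr) * r)) ∧
      θ αU = αU := by
  refine ⟨φ₀, χ₀, θ₀, φ₀_pa, φ₀_pb, ?_, ?_, twistEquiv_single φ₀ χ₀, θ₀_αU⟩
  · exact congrArg Units.val (negSqCharacter_pa _ _)
  · exact congrArg Units.val (negSqCharacter_pb _ _)
end
end
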